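/- Let 2 ≤ ℓ < k and let H be an ℓ-covering k-hypergraph. Then H is quasi-eulerian if and only if H has at least two edges. -/

import Mathlib

/-- A closed walk of length `k` in a hypergraph on vertex type `V` whose edges are
finite sets of vertices: an alternating sequence of vertices and edges such that
consecutive vertices are distinct and both lie in the interposed edge, and the
first vertex equals the last. -/
def IsClosedWalk {V : Type} (k : ℕ) (v : Fin (k + 1) → V) (e : Fin k → Finset V) : Prop :=
  v 0 = v (Fin.last k) ∧
    ∀ i : Fin k, v i.castSucc ≠ v i.succ ∧ v i.castSucc ∈ e i ∧ v i.succ ∈ e i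

/-- The multiset of edges traversed by a walk (with multiplicity). -/
def walkEdges {V : Type} {k : ℕ} (e : Fin k → Finset V) : Multiset (Finset V) :=
  Multiset.ofList (List.ofFn e)

/-- A hypergraph, given by its edge multiset `E` over vertex type `V`, is eulerian if it
admits a closed walk whose multiset of traversed edges is exactly `E`, i.e. a closed
strict trail traversing every edge exactly once (a trivial walk works iff `E = 0`,
matching the convention that a trivial walk is an Euler tour of an edgeless
hypergraph). -/
def IsEulerian {V : Type} (E : Multiset (Finset V)) : Prop :=
  ∃ (k : ℕ) (v : Fin (k + 1) → V) (e : Fin k → Finset V),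
    IsClosedWalk k v e ∧ walkEdges e = E

/-- An Euler family: a finite collection of nontrivial closed strict trails, pairwise
anchor-disjoint (no two trails traverse a common vertex), whose traversed edges jointly
form the edge multiset `E`, so every edge is traversed exactly once and the trails are
pairwise edge-disjoint. -/
def IsEulerFamily {V : Type} (E : Multiset (Finset V)) (n : ℕ) (len : Fin n → ℕ)
    (v : (i : Fin n) → Fin (len i + 1) → V)
    (e : (i : Fin n) → Fin (len i) → Finset V) : Prop :=
  (∀ i, 1 ≤ len i) ∧ (∀ i, IsClosedWalk (len i) (v i) (e i)) ∧
    (∀ i j, i ≠ j → ∀ a b, v i a ≠ v j b) ∧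
    (∑ i, walkEdges (e i)) = E

/-- A hypergraph is quasi-eulerian if it admits an Euler family. -/
def IsQuasiEulerian {V : Type} (E : Multiset (Finset V)) : Prop :=
  ∃ n len v e, IsEulerFamily E n len v e

/-- An `l`-covering `k`-hypergraph on vertex type `V`: a nonempty `k`-uniform edge
multiset such that every `l`-element subset of the vertex set is contained in at
least one edge. -/
def IsCoveringHypergraph {V : Type} [DecidableEq V] (E : Multiset (Finset V))
    (l k : ℕ) : Prop :=
  E ≠ 0 ∧ (∀ f ∈ E, f.card = k) ∧
    ∀ s : Finset V, s.card = l → ∃ f ∈ E, s ⊆ f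

/-!
If each edge is given a pair of its vertices so that the resulting multigraph has only even degrees,
then a decomposition of that multigraph into as few trails as possible consists of closed,
anchor-disjoint trails, hence is an Euler family. Such pairs come from a perfect matching of a graph
on the incidences (flags) of the hypergraph, where each edge `e` has `#e - 2` extra dummies that
absorb all but two of its flags. By Tutte's theorem a perfect matching is missing only if there is a
barrier. A minimal barrier consists of all flags of the edges in a set `A` and all dummies of the
edges in a set `B`, and the edges outside `A ∪ B` are monochromatic when vertices are coloured by
components. As every pair of vertices lies in an edge, counting incidences forces `A = ∅` and
`#B = 1`; then any second edge has the same vertices as the edge in `B` and cannot be monochromatic.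
-/

open Finset

section Walks

variable {V : Type}

/-- `IsWalk a b L` says that `L` lists the steps of a walk from `a` to `b`, a step being the pair of
the vertex it leaves from and the edge it traverses. Edges may repeat: that a trail traverses no
edge twice is recorded by comparing its multiset of edges with that of the hypergraph. -/
inductive IsWalk : V → V → List (V × Finset V) → Prop
  | nil (a : V) : IsWalk a a []
  | cons {a b c : V} {f : Finset V} {L : List (V × Finset V)} (hne : a ≠ b) (ha : a ∈ f)
      (hb : b ∈ f) (hL : IsWalk b c L) : IsWalk a c ((a, f) :: L)

namespace IsWalk

variable {a b c x : V} {f : Finset V} {L L' : List (V × Finset V)}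

theorem append (h : IsWalk a b L) (h' : IsWalk b c L') : IsWalk a c (L ++ L') := by
  induction h with
  | nil => exact h'
  | cons hne ha hb _ ih => exact cons hne ha hb (ih h')

theorem exists_reverse (h : IsWalk a b L) :
    ∃ L', IsWalk b a L' ∧ (L'.map Prod.snd).Perm (L.map Prod.snd) := by
  induction h with
  | nil a => exact ⟨[], nil a, .refl _⟩
  | @cons a b c f L hne ha hb _ ih =>
    obtain ⟨L', hL', hperm⟩ := ih
    refine ⟨L' ++ [(b, f)], hL'.append (cons hne.symm hb ha (nil a)), ?_⟩
    simpa only [List.map_append, List.map_cons, List.map_nil] using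
      (List.perm_append_singleton _ _).trans (hperm.cons f)

theorem of_append_cons (h : IsWalk a b (L ++ (x, f) :: L')) :
    IsWalk a x L ∧ IsWalk x b ((x, f) :: L') := by
  induction L generalizing a with
  | nil => cases h with | cons hne ha hb hL => exact ⟨nil _, cons hne ha hb hL⟩
  | cons p L ih =>
    cases h with
    | cons hne ha hb hL => exact ⟨cons hne ha hb (ih hL).1, (ih hL).2⟩

theorem exists_rotate (h : IsWalk a a L) (hx : x ∈ L.map Prod.fst) :
    ∃ L', IsWalk x x L' ∧ L'.Perm L := by
  obtain ⟨⟨_, f⟩, hmem, rfl⟩ := List.mem_map.mp hx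
  obtain ⟨L₁, L₂, rfl⟩ := List.append_of_mem hmem
  obtain ⟨h₁, h₂⟩ := h.of_append_cons
  exact ⟨_, h₂.append h₁, List.perm_append_comm⟩

theorem exists_vertices (h : IsWalk a b L) :
    ∃ v : Fin (L.length + 1) → V, v 0 = a ∧ v (Fin.last _) = b ∧
      ∀ i : Fin L.length, v i.castSucc = (L.get i).1 ∧
        v i.castSucc ≠ v i.succ ∧ v i.castSucc ∈ (L.get i).2 ∧ v i.succ ∈ (L.get i).2 := by
  induction h with
  | nil a => exact ⟨fun _ => a, rfl, rfl, fun i => i.elim0⟩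
  | @cons a b c f L hne ha hb _ ih =>
    obtain ⟨v, rfl, hlast, hstep⟩ := ih
    exact ⟨Fin.cons a v, rfl, hlast, Fin.cases ⟨rfl, hne, ha, hb⟩ hstep⟩

end IsWalk

variable (V) in
/-- A walk of positive length in a hypergraph on `V`, with its end vertices. -/
structure NontrivialWalk where
  start : V
  finish : V
  steps : List (V × Finset V)
  isWalk : IsWalk start finish steps
  steps_ne_nil : steps ≠ []

namespace NontrivialWalk

/-- The multiset of edges that a walk traverses. -/
def edges (t : NontrivialWalk V) : Multiset (Finset V) := t.steps.map Prod.snd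

/-- The two end vertices of a walk, so that a closed walk has its base point twice. -/
def ends (t : NontrivialWalk V) : Multiset V := {t.start, t.finish}

/-- The vertices from which the steps of a walk leave; these are all the vertices that a closed
walk traverses. -/
def anchors (t : NontrivialWalk V) : List V := t.steps.map Prod.fst

theorem exists_reverse (t : NontrivialWalk V) :
    ∃ s : NontrivialWalk V, s.start = t.finish ∧ s.finish = t.start ∧ s.edges = t.edges := by
  obtain ⟨L, hL, hperm⟩ := t.isWalk.exists_reverse
  refine ⟨⟨_, _, L, hL, ?_⟩, rfl, rfl, Multiset.coe_eq_coe.mpr hperm⟩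
  rintro rfl
  exact t.steps_ne_nil (by simpa using hperm)

theorem exists_start_eq {t : NontrivialWalk V} {x : V} (hx : x ∈ t.ends) :
    ∃ s : NontrivialWalk V, s.start = x ∧ s.edges = t.edges ∧ s.ends = t.ends := by
  rcases (by simpa [ends] using hx : x = t.start ∨ x = t.finish) with rfl | rfl
  · exact ⟨t, rfl, rfl, rfl⟩
  · obtain ⟨s, hstart, hfinish, hedges⟩ := t.exists_reverse
    exact ⟨s, hstart, hedges, by rw [ends, ends, hstart, hfinish, Multiset.pair_comm]⟩

theorem exists_finish_eq {t : NontrivialWalk V} {x : V} (hx : x ∈ t.ends) :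
    ∃ s : NontrivialWalk V, s.finish = x ∧ s.edges = t.edges ∧ s.ends = t.ends := by
  obtain ⟨r, rfl, hedges, hends⟩ := exists_start_eq hx
  obtain ⟨s, hstart, hfinish, hedges'⟩ := r.exists_reverse
  refine ⟨s, hfinish, hedges'.trans hedges, ?_⟩
  rw [← hends, ends, ends, hstart, hfinish, Multiset.pair_comm]

theorem exists_join {s t : NontrivialWalk V} {x : V} (hs : x ∈ s.ends) (ht : x ∈ t.ends) :
    ∃ r : NontrivialWalk V, r.edges = s.edges + t.edges ∧ r.ends + {x, x} = s.ends + t.ends := by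
  obtain ⟨s', rfl, hsedges, hsends⟩ := exists_finish_eq hs
  obtain ⟨t', hjoin, htedges, htends⟩ := exists_start_eq ht
  refine ⟨⟨s'.start, t'.finish, s'.steps ++ t'.steps, s'.isWalk.append (hjoin ▸ t'.isWalk),
    by simp [s'.steps_ne_nil]⟩, ?_, ?_⟩
  · rw [← hsedges, ← htedges]
    simp [edges]
  · rw [← hsends, ← htends]
    simp only [ends, hjoin, Multiset.insert_eq_cons, ← Multiset.singleton_add]
    abel

theorem exists_rotate {t : NontrivialWalk V} {x : V} (hclosed : t.start = t.finish)
    (hx : x ∈ t.anchors) : ∃ s : NontrivialWalk V, s.edges = t.edges ∧ s.ends = {x, x} := by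
  obtain ⟨L, hL, hperm⟩ := (hclosed ▸ t.isWalk : IsWalk t.start t.start t.steps).exists_rotate hx
  refine ⟨⟨x, x, L, hL, ?_⟩, Multiset.coe_eq_coe.mpr (hperm.map _), rfl⟩
  rintro rfl
  exact t.steps_ne_nil (by simpa using hperm)

theorem exists_isClosedWalk {t : NontrivialWalk V} (hclosed : t.start = t.finish) :
    ∃ v : Fin (t.steps.length + 1) → V,
      IsClosedWalk t.steps.length v (fun i => (t.steps.get i).2) ∧ ∀ i, v i ∈ t.anchors := by
  obtain ⟨v, hstart, hfinish, hstep⟩ := t.isWalk.exists_vertices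
  have hloop : v 0 = v (Fin.last _) := by rw [hstart, hfinish, hclosed]
  have hanchor (i : Fin t.steps.length) : v i.castSucc ∈ t.anchors := by
    rw [(hstep i).1]
    exact List.mem_map_of_mem (List.get_mem _ _)
  refine ⟨v, ⟨hloop, fun i => (hstep i).2⟩, Fin.lastCases ?_ hanchor⟩
  rw [← hloop]
  exact hanchor ⟨0, List.length_pos_iff.mpr t.steps_ne_nil⟩

theorem walkEdges_steps (t : NontrivialWalk V) :
    walkEdges (fun i => (t.steps.get i).2) = t.edges := by
  conv_rhs => rw [edges, ← List.ofFn_get t.steps, List.map_ofFn]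
  rfl

end NontrivialWalk

theorem isQuasiEulerian_of_pairwise_disjoint_anchors {l : List (NontrivialWalk V)}
    (hclosed : ∀ t ∈ l, t.start = t.finish)
    (hdisj : l.Pairwise fun s t => s.anchors.Disjoint t.anchors) :
    IsQuasiEulerian (l.map NontrivialWalk.edges).sum := by
  choose v hwalk hanchor using fun i : Fin l.length =>
    NontrivialWalk.exists_isClosedWalk (hclosed _ (l.get_mem i))
  have hdisj_of_lt {i j : Fin l.length} (hij : i < j) a b : v i a ≠ v j b := fun h =>
    List.pairwise_iff_get.mp hdisj i j hij (hanchor i a) (h ▸ hanchor j b)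
  refine ⟨l.length, fun i => (l.get i).steps.length, v, fun i j => ((l.get i).steps.get j).2,
    fun i => List.length_pos_iff.mpr (l.get i).steps_ne_nil, hwalk, fun i j hij a b => ?_, ?_⟩
  · rcases lt_or_gt_of_ne hij with hlt | hgt
    · exact hdisj_of_lt hlt a b
    · exact (hdisj_of_lt hgt b a).symm
  · simp only [NontrivialWalk.walkEdges_steps]
    conv_rhs => rw [← List.ofFn_get l, List.map_ofFn, List.sum_ofFn]
    rfl

variable [DecidableEq V]

theorem even_count_pair_self (x y : V) : Even (Multiset.count y {x, x}) := by
  by_cases h : y = x <;> simp [h]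

theorem NontrivialWalk.even_count_ends {t : NontrivialWalk V} (hclosed : t.start = t.finish)
    (x : V) : Even (t.ends.count x) := by
  rw [ends, hclosed]
  exact even_count_pair_self _ _

/-- A decomposition of the edge multiset `E` into walks in which every vertex occurs an even number
of times as an end. -/
structure IsEvenDecomposition (E : Multiset (Finset V)) (D : Multiset (NontrivialWalk V)) :
    Prop where
  sum_edges : (D.map NontrivialWalk.edges).sum = E
  even_count_ends (x : V) : Even ((D.map NontrivialWalk.ends).sum.count x)

namespace IsEvenDecomposition

variable {E : Multiset (Finset V)} {D R : Multiset (NontrivialWalk V)} {r s t : NontrivialWalk V}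

theorem replace_pair (h : IsEvenDecomposition E (s ::ₘ t ::ₘ R))
    (hedges : r.edges = s.edges + t.edges)
    (hends : ∀ x, Even ((s.ends + t.ends + r.ends).count x)) :
    IsEvenDecomposition E (r ::ₘ R) := by
  refine ⟨?_, fun x => ?_⟩
  · simpa [hedges, add_assoc] using h.sum_edges
  · have hsum := (h.even_count_ends x).add (hends x)
    simp only [Multiset.map_cons, Multiset.sum_cons, Multiset.count_add, Nat.even_iff] at hsum ⊢
    lia

theorem exists_end_mem (h : IsEvenDecomposition E (s ::ₘ R)) (hopen : s.start ≠ s.finish) :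
    ∃ t ∈ R, s.finish ∈ t.ends := by
  by_contra! hnone
  have hzero : (R.map NontrivialWalk.ends).sum.count s.finish = 0 := by
    refine Multiset.count_eq_zero_of_notMem fun hmem => ?_
    obtain ⟨t, ht, hend⟩ := Multiset.mem_bind.mp hmem
    exact hnone t ht hend
  have heven := h.even_count_ends s.finish
  simp [hzero, NontrivialWalk.ends, hopen.symm] at heven

theorem exists_card_lt_of_start_ne_finish (h : IsEvenDecomposition E D) (hs : s ∈ D)
    (hopen : s.start ≠ s.finish) : ∃ D', IsEvenDecomposition E D' ∧ D'.card < D.card := by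
  obtain ⟨R, rfl⟩ := Multiset.exists_cons_of_mem hs
  obtain ⟨t, ht, hend⟩ := h.exists_end_mem hopen
  obtain ⟨R, rfl⟩ := Multiset.exists_cons_of_mem ht
  obtain ⟨r, hedges, hends⟩ :=
    NontrivialWalk.exists_join (by simp [NontrivialWalk.ends] : s.finish ∈ s.ends) hend
  refine ⟨r ::ₘ R, h.replace_pair hedges fun x => ?_, by simp⟩
  rw [← hends, add_right_comm, Multiset.count_add, Multiset.count_add]
  exact (Even.add_self _).add (even_count_pair_self _ _)

theorem exists_card_lt_of_common_anchor (h : IsEvenDecomposition E D) (hst : {s, t} ≤ D)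
    (hs : s.start = s.finish) (ht : t.start = t.finish) {x : V} (hxs : x ∈ s.anchors)
    (hxt : x ∈ t.anchors) : ∃ D', IsEvenDecomposition E D' ∧ D'.card < D.card := by
  obtain ⟨R, rfl⟩ := Multiset.le_iff_exists_add.mp hst
  obtain ⟨s', hsedges, hsends⟩ := NontrivialWalk.exists_rotate hs hxs
  obtain ⟨t', htedges, htends⟩ := NontrivialWalk.exists_rotate ht hxt
  obtain ⟨r, hedges, hends⟩ :=
    NontrivialWalk.exists_join (by simp [hsends] : x ∈ s'.ends) (by simp [htends] : x ∈ t'.ends)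
  have hr (y) : Even (r.ends.count y) := by
    rw [hsends, htends, add_left_inj] at hends
    exact hends ▸ even_count_pair_self x y
  refine ⟨r ::ₘ R, replace_pair (s := s) (t := t) (by simpa using h)
    (by rw [hedges, hsedges, htedges]) fun y => ?_, by simp⟩
  simp only [Multiset.count_add]
  exact ((NontrivialWalk.even_count_ends hs y).add (NontrivialWalk.even_count_ends ht y)).add (hr y)

theorem isQuasiEulerian (h : IsEvenDecomposition E D) : IsQuasiEulerian E := by
  obtain ⟨D, hD, hmin⟩ := exists_minimalFor_of_wellFoundedLT (IsEvenDecomposition E)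
    Multiset.card ⟨D, h⟩
  have hirred : ¬ ∃ D', IsEvenDecomposition E D' ∧ D'.card < D.card :=
    fun ⟨D', hD', hlt⟩ => hlt.not_ge (hmin hD' hlt.le)
  have hclosed (t) (ht : t ∈ D) : t.start = t.finish := by
    by_contra hopen
    exact hirred (hD.exists_card_lt_of_start_ne_finish ht hopen)
  induction D using Quot.inductionOn with | h l
  have hdisj : l.Pairwise fun s t => s.anchors.Disjoint t.anchors := by
    refine List.pairwise_iff_forall_sublist.mpr fun {s t} hst x hxs hxt => ?_
    have hle : ({s, t} : Multiset (NontrivialWalk V)) ≤ l := hst.subperm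
    exact hirred (hD.exists_card_lt_of_common_anchor hle (hclosed s (hst.subset (by simp)))
      (hclosed t (hst.subset (by simp))) hxs hxt)
  rw [← hD.sum_edges]
  simpa using isQuasiEulerian_of_pairwise_disjoint_anchors hclosed hdisj

end IsEvenDecomposition

end Walks

/-- A choice of a pair `P e` of vertices in each edge `F e` of an indexed hypergraph such that
every vertex lies in an even number of chosen pairs. As a multigraph, `P` has only even degrees. -/
structure IsEvenPairing {ι V : Type*} [Fintype ι] [DecidableEq V] (F P : ι → Finset V) :
    Prop where
  subset (e : ι) : P e ⊆ F e
  card_eq_two (e : ι) : #(P e) = 2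
  even_card (x : V) : Even #{e | x ∈ P e}

theorem IsEvenPairing.isQuasiEulerian {ι : Type*} {V : Type} [Fintype ι] [DecidableEq V]
    {F P : ι → Finset V} (h : IsEvenPairing F P) : IsQuasiEulerian (univ.val.map F) := by
  choose a b hne hP using fun e => Finset.card_eq_two.mp (h.card_eq_two e)
  have ha e : a e ∈ F e := h.subset e (by simp [hP])
  have hb e : b e ∈ F e := h.subset e (by simp [hP])
  let step (e : ι) : NontrivialWalk V :=
    ⟨a e, b e, [(a e, F e)], .cons (hne e) (ha e) (hb e) (.nil _), by simp⟩
  have hends e : (step e).ends = (P e).val := by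
    rw [hP, insert_val_of_notMem (by simp [hne])]
    rfl
  refine IsEvenDecomposition.isQuasiEulerian (D := univ.val.map step) ⟨?_, fun x => ?_⟩
  · rw [Multiset.map_map, ← Multiset.sum_map_singleton (Multiset.map F _), Multiset.map_map]
    rfl
  · convert h.even_card x
    rw [Multiset.map_map, Multiset.count_sum, card_filter]
    refine sum_congr rfl fun e _ => ?_
    rw [Function.comp_apply, hends, Multiset.count_eq_of_nodup (P e).nodup]
    rfl

theorem two_le_of_isClosedWalk {V : Type} {k : ℕ} {v : Fin (k + 1) → V} {e : Fin k → Finset V}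
    (hk : 1 ≤ k) (h : IsClosedWalk k v e) : 2 ≤ k := by
  by_contra! hlt
  obtain rfl : k = 1 := by lia
  exact (h.2 0).1 h.1

theorem IsQuasiEulerian.two_le_card {V : Type} {E : Multiset (Finset V)} (h : IsQuasiEulerian E)
    (hE : E ≠ 0) : 2 ≤ E.card := by
  obtain ⟨n, len, v, e, hlen, hwalk, -, rfl⟩ := h
  obtain ⟨i, -, -⟩ := exists_ne_zero_of_sum_ne_zero hE
  calc 2 ≤ len i := two_le_of_isClosedWalk (hlen i) (hwalk i)
    _ = (walkEdges (e i)).card := by simp [walkEdges]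
    _ ≤ (∑ j, walkEdges (e j)).card :=
      Multiset.card_le_card (single_le_sum (fun _ _ => Multiset.zero_le _) (mem_univ i))

section Barriers

variable {N C : Type*} [Fintype N] [DecidableEq N] [Fintype C] [DecidableEq C]
  {G : SimpleGraph N} {U : Finset N} {f : N → C}

/-- The colours that `f` gives to an odd number of elements outside `U`. -/
def oddColors (U : Finset N) (f : N → C) : Finset C := {c | Odd #{x ∈ Uᶜ | f x = c}}

theorem mem_oddColors {c : C} : c ∈ oddColors U f ↔ Odd #{x ∈ Uᶜ | f x = c} := by
  simp [oddColors]

theorem even_card_add_card_oddColors (hN : Even (Fintype.card N)) (U : Finset N) (f : N → C) :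
    Even (#U + #(oddColors U f)) := by
  have hodd := odd_sum_iff_odd_card_odd (s := univ) fun c => #{x ∈ Uᶜ | f x = c}
  rw [← card_eq_sum_card_fiberwise fun _ _ => mem_coe.mpr (mem_univ _)] at hodd
  change Odd #Uᶜ ↔ Odd #(oddColors U f) at hodd
  rw [← card_add_card_compl U] at hN
  grind

/-- A violation of Tutte's condition. Instead of the connected components of `G - U` it records a
colouring constant on each of them, so that components may be merged by recolouring. -/
structure IsBarrier (G : SimpleGraph N) (U : Finset N) (f : N → C) : Prop where
  eq_of_adj {x y : N} (hx : x ∉ U) (hy : y ∉ U) (h : G.Adj x y) : f x = f y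
  card_lt : #U < #(oddColors U f)

theorem IsBarrier.card_add_two_le (h : IsBarrier G U f) (hN : Even (Fintype.card N)) :
    #U + 2 ≤ #(oddColors U f) := by
  have heven := even_card_add_card_oddColors hN U f
  have hlt := h.card_lt
  grind

theorem exists_isBarrier_of_forall_not_isPerfectMatching
    (h : ∀ M : G.Subgraph, ¬ M.IsPerfectMatching) :
    ∃ (U : Finset N) (f : N → N), IsBarrier G U f := by
  classical
  have htutte := SimpleGraph.tutte.not.mp (not_exists.mpr h)
  push Not at htutte
  obtain ⟨u, hu⟩ := htutte
  let K := ((⊤ : G.Subgraph).deleteVerts u).coe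
  let color : N → N := Function.extend Subtype.val (fun y => (K.connectedComponentMk y).out.1) id
  have color_coe (y : ((⊤ : G.Subgraph).deleteVerts u).verts) :
      color y = (K.connectedComponentMk y).out.1 :=
    Subtype.val_injective.extend_apply _ _ y
  have out_injective : Function.Injective fun c : K.ConnectedComponent => c.out.1 :=
    Subtype.val_injective.comp (Function.LeftInverse.injective Quot.out_eq)
  have mem_verts x (hx : x ∉ u.toFinset) : x ∈ ((⊤ : G.Subgraph).deleteVerts u).verts := by
    simpa using hx
  have class_eq (c : K.ConnectedComponent) :
      {x ∈ u.toFinsetᶜ | color x = c.out.1} = c.supp.toFinset.map (.subtype _) := by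
    ext x
    by_cases hx : x ∈ u.toFinset
    · simp [Set.mem_toFinset.mp hx]
    · have hinj := out_injective.eq_iff (a := K.connectedComponentMk ⟨x, mem_verts x hx⟩) (b := c)
      simpa [color_coe ⟨x, mem_verts x hx⟩, Set.mem_toFinset.not.mp hx] using hinj
  refine ⟨u.toFinset, color, fun {x y} hx hy hxy => ?_, ?_⟩
  · have hadj : K.Adj ⟨x, mem_verts x hx⟩ ⟨y, mem_verts y hy⟩ := by
      simpa [K, hxy] using And.intro hx hy
    rw [color_coe ⟨x, mem_verts x hx⟩, color_coe ⟨y, mem_verts y hy⟩,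
      SimpleGraph.ConnectedComponent.sound hadj.reachable]
  · calc #u.toFinset = u.ncard := (Set.ncard_eq_toFinset_card' u).symm
      _ < K.oddComponents.ncard := hu
      _ = #(K.oddComponents.toFinset.map ⟨_, out_injective⟩) := by
        rw [card_map, Set.ncard_eq_toFinset_card']
      _ ≤ #(oddColors u.toFinset color) := card_le_card ?_
    intro x hx
    obtain ⟨c, hc, rfl⟩ := mem_map.mp hx
    rw [Function.Embedding.coeFn_mk, mem_oddColors, class_eq, card_map,
      ← Set.ncard_eq_toFinset_card']
    exact (Set.mem_toFinset (s := K.oddComponents)).mp hc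

/-- A barrier whose deleted set has the least possible size. -/
structure IsMinimalBarrier (G : SimpleGraph N) (U : Finset N) (f : N → C) : Prop
    extends IsBarrier G U f where
  card_le {U' : Finset N} {f' : N → C} (h : IsBarrier G U' f') : #U ≤ #U'

theorem IsBarrier.exists_isMinimalBarrier (h : IsBarrier G U f) :
    ∃ (U' : Finset N) (f' : N → C), IsMinimalBarrier G U' f' := by
  obtain ⟨⟨U', f'⟩, hbarrier, hmin⟩ := exists_minimalFor_of_wellFoundedLT
    (fun p : Finset N × (N → C) => IsBarrier G p.1 p.2) (fun p => #p.1) ⟨(U, f), h⟩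
  exact ⟨U', f', hbarrier, fun {V g} hV => (le_total _ _).elim id (@hmin (V, g) hV)⟩

-- Deleting fewer vertices: `w` joins the merged class of `c₁` and `c₂`, which costs at most two
-- odd classes, so by parity the result is again a barrier.
theorem IsBarrier.erase (h : IsBarrier G U f) (hN : Even (Fintype.card N)) {w : N} (hw : w ∈ U)
    {c₁ c₂ : C} (hadj : ∀ y ∉ U, G.Adj w y → f y = c₁ ∨ f y = c₂) :
    IsBarrier G (U.erase w)
      fun x => if x = w ∨ f x = c₂ then c₁ else f x := by
  refine ⟨fun {x y} hx hy hxy => ?_, ?_⟩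
  · have := @h.eq_of_adj x y
    have := hadj x
    have := hadj y
    have := hxy.symm
    grind
  · have hsub : ((oddColors U f).erase c₁).erase c₂ ⊆
        oddColors (U.erase w) fun x => if x = w ∨ f x = c₂ then c₁ else f x := by
      intro c hc
      simp only [mem_erase, mem_oddColors] at hc ⊢
      convert hc.2.2 using 2
      ext x
      simp only [mem_filter, mem_compl]
      grind
    have := card_le_card hsub
    have := pred_card_le_card_erase (s := oddColors U f) (a := c₁)
    have := pred_card_le_card_erase (s := (oddColors U f).erase c₁) (a := c₂)
    have := h.card_add_two_le hN
    have := card_erase_lt_of_mem hw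
    lia

theorem IsMinimalBarrier.exists_adj_ne_ne (h : IsMinimalBarrier G U f)
    (hN : Even (Fintype.card N)) {w : N} (hw : w ∈ U) (c₁ c₂ : C) :
    ∃ y ∉ U, G.Adj w y ∧ f y ≠ c₁ ∧ f y ≠ c₂ := by
  by_contra! hcon
  have hle := h.card_le (h.erase hN hw fun y hy hwy => or_iff_not_imp_left.mpr (hcon y hy hwy))
  exact hle.not_gt (card_erase_lt_of_mem hw)

end Barriers

section Gadget

theorem even_card_of_existsUnique_rel {α : Type*} {s : Finset α} {r : α → α → Prop}
    (hsymm : ∀ a b, r a b → r b a) (hirrefl : ∀ a, ¬ r a a)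
    (h : ∀ a ∈ s, ∃! b, b ∈ s ∧ r a b) : Even #s := by
  choose partner hpartner hunique using h
  rw [← ZMod.natCast_eq_zero_iff_even, card_eq_sum_ones, Nat.cast_sum]
  refine sum_involution partner (fun _ _ => by decide)
    (fun a ha _ heq => hirrefl a ?_) (fun a ha => (hpartner a ha).1) fun a ha => ?_
  · simpa only [heq] using (hpartner a ha).2
  · exact (hunique _ _ a ⟨ha, hsymm _ _ (hpartner a ha).2⟩).symm

variable {ι V : Type*} {F : ι → Finset V}

/-- The vertices of `pairingGadget F`: a flag for each incidence between an edge and one of its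
vertices, and `#(F e) - 2` dummies for each edge `e`. -/
abbrev GadgetNode (F : ι → Finset V) : Type _ := (Σ e, F e) ⊕ (Σ e, Fin (#(F e) - 2))

/-- The incidence of `e` with its vertex `v`, as a gadget vertex. -/
abbrev flag (e : ι) (v : F e) : GadgetNode F := .inl ⟨e, v⟩

/-- The `i`-th dummy of the edge `e`. -/
abbrev dummy (e : ι) (i : Fin (#(F e) - 2)) : GadgetNode F := .inr ⟨e, i⟩

/-- The graph joining the flags at a common vertex of `V`, and each flag of an edge to the dummies
of that edge. In a perfect matching the dummies of `e` absorb all but two flags of `e`, and the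
remaining flags are matched along vertices of `V`. -/
def pairingGadget (F : ι → Finset V) : SimpleGraph (GadgetNode F) where
  Adj
    | .inl p, .inl q => p.1 ≠ q.1 ∧ p.2.1 = q.2.1
    | .inl p, .inr d => p.1 = d.1
    | .inr d, .inl p => p.1 = d.1
    | .inr _, .inr _ => False
  symm := ⟨by rintro (p | d) (q | d') h <;> simp_all [eq_comm]⟩
  loopless := ⟨by rintro (p | d) h <;> simp at h⟩

/-- The shape of a minimal barrier of `pairingGadget F`, seen in the hypergraph: the barrier
consists of the flags of the edges in `A` and the dummies of the edges in `B`. The set `R` contains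
one vertex of each colour counted as an odd component. -/
structure IsPairingObstruction {C : Type*} [DecidableEq ι] [DecidableEq C] (F : ι → Finset V)
    (A B : Finset ι) (c : V → C) (R : Finset V) : Prop where
  eq_of_notMem_union {e : ι} (he : e ∉ A ∪ B) : ∀ u ∈ F e, ∀ v ∈ F e, c u = c v
  injOn : Set.InjOn c R
  card_ge : 2 * #A + ∑ e ∈ B, (#(F e) - 2) + 2 ≤ #R
  odd_sum : ∀ v ∈ R, Odd (∑ e ∈ B, #{u ∈ F e | c u = c v})

namespace pairingGadget

theorem flag_adj_dummy {e : ι} (v : F e) (i : Fin (#(F e) - 2)) :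
    (pairingGadget F).Adj (flag e v) (dummy e i) := rfl

theorem exists_eq_flag_of_dummy_adj {e : ι} {i : Fin (#(F e) - 2)} {y : GadgetNode F}
    (h : (pairingGadget F).Adj (dummy e i) y) : ∃ v, y = flag e v := by
  obtain ⟨e', v⟩ | d := y
  · obtain rfl : e' = e := h
    exact ⟨v, rfl⟩
  · exact h.elim

theorem eq_dummy_or_eq_flag_of_flag_adj {e : ι} {v : F e} {y : GadgetNode F}
    (h : (pairingGadget F).Adj (flag e v) y) :
    (∃ i, y = dummy e i) ∨ ∃ (e' : ι) (hv : v.1 ∈ F e'), e ≠ e' ∧ y = flag (F := F) e' ⟨v, hv⟩ := by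
  obtain ⟨e', v', hv'⟩ | ⟨e', i⟩ := y
  · obtain ⟨hne, rfl⟩ := h
    exact .inr ⟨e', hv', hne, rfl⟩
  · obtain rfl : e = e' := h
    exact .inl ⟨i, rfl⟩

theorem even_card_gadgetNode [Fintype ι] (hF : ∀ e, 2 ≤ #(F e)) :
    Even (Fintype.card (GadgetNode F)) := by
  simp only [Fintype.card_sum, Fintype.card_sigma, Fintype.card_coe, Fintype.card_fin,
    ← sum_add_distrib]
  exact even_sum _ fun e _ => ⟨#(F e) - 1, by have := hF e; lia⟩

open scoped Classical in
/-- The vertices of `e` whose flag is not matched to a dummy. -/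
noncomputable def unabsorbed (M : (pairingGadget F).Subgraph) (e : ι) : Finset V :=
  {v ∈ F e | ∀ (hv : v ∈ F e) i, ¬ M.Adj (flag e ⟨v, hv⟩) (dummy e i)}

variable {M : (pairingGadget F).Subgraph}

theorem card_unabsorbed (hM : M.IsPerfectMatching) {e : ι} (he : 2 ≤ #(F e)) :
    #(unabsorbed M e) = 2 := by
  classical
  have hpartner i : ∃ v : F e, M.Adj (dummy e i) (flag e v) := by
    obtain ⟨y, hy, -⟩ := hM.1 (hM.2 (dummy e i))
    obtain ⟨v, rfl⟩ := exists_eq_flag_of_dummy_adj hy.adj_sub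
    exact ⟨v, hy⟩
  choose partner hadj using hpartner
  have hinj : Function.Injective fun i => (partner i).1 := fun i j hij => by
    have hflag := hadj i
    rw [Subtype.ext hij] at hflag
    simpa using hM.1.eq_of_adj_right hflag (hadj j)
  have hsdiff : unabsorbed M e = F e \ univ.image fun i => (partner i).1 := by
    ext v
    simp only [unabsorbed, mem_filter, mem_sdiff, mem_image, mem_univ, true_and, not_exists]
    refine and_congr_right fun hv => ⟨fun h i hi => ?_, fun h _ i hi => ?_⟩
    · subst hi
      exact h hv i (hadj i).symm
    · exact h i (congrArg Subtype.val (by simpa using hM.1.eq_of_adj_left (hadj i) hi.symm))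
  have himage : univ.image (fun i => (partner i).1) ⊆ F e :=
    image_subset_iff.mpr fun i _ => (partner i).2
  rw [hsdiff, card_sdiff_of_subset himage, card_image_of_injective _ hinj, card_univ,
    Fintype.card_fin]
  lia

theorem mem_unabsorbed_iff (hM : M.IsPerfectMatching) {e : ι} {v : V} :
    v ∈ unabsorbed M e ↔
      ∃ (hv : v ∈ F e) (e' : ι) (hv' : v ∈ F e'), M.Adj (flag e ⟨v, hv⟩) (flag e' ⟨v, hv'⟩) := by
  classical
  simp only [unabsorbed, mem_filter]
  constructor
  · rintro ⟨hv, hdummy⟩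
    obtain ⟨y, hy, -⟩ := hM.1 (hM.2 (flag e ⟨v, hv⟩))
    obtain ⟨i, rfl⟩ | ⟨e', hv', -, rfl⟩ := eq_dummy_or_eq_flag_of_flag_adj hy.adj_sub
    · exact (hdummy hv i hy).elim
    · exact ⟨hv, e', hv', hy⟩
  · rintro ⟨hv, e', hv', hy⟩
    exact ⟨hv, fun _ i hi => by simpa using hM.1.eq_of_adj_left hi hy⟩

theorem isEvenPairing_unabsorbed [Fintype ι] [DecidableEq V] (hM : M.IsPerfectMatching)
    (hF : ∀ e, 2 ≤ #(F e)) : IsEvenPairing F (unabsorbed M) := by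
  classical
  refine ⟨fun e v hv => ((mem_unabsorbed_iff hM).mp hv).1,
    fun e => card_unabsorbed hM (hF e), fun v => ?_⟩
  refine even_card_of_existsUnique_rel
    (r := fun e e' => ∃ (hv : v ∈ F e) (hv' : v ∈ F e'),
      M.Adj (flag e ⟨v, hv⟩) (flag e' ⟨v, hv'⟩))
    (fun e e' ⟨hv, hv', h⟩ => ⟨hv', hv, h.symm⟩) (fun e ⟨hv, hv', h⟩ => h.ne rfl) fun e he => ?_
  obtain ⟨hv, e', hv', h⟩ := (mem_unabsorbed_iff hM).mp (mem_filter.mp he).2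
  refine ⟨e', ⟨?_, hv, hv', h⟩, fun e'' ⟨_, _, _, h''⟩ => ?_⟩
  · exact mem_filter.mpr ⟨mem_univ _, (mem_unabsorbed_iff hM).mpr ⟨hv', e, hv, h.symm⟩⟩
  · simpa using congrArg (Sum.elim Sigma.fst Sigma.fst) (hM.1.eq_of_adj_left h'' h)

theorem card_filter_gadgetNode [Fintype ι] (p : GadgetNode F → Prop) [DecidablePred p] :
    #{y | p y} = ∑ e, (#{v : F e | p (flag e v)} + #{i | p (dummy e i)}) := by
  simp only [card_filter, Fintype.sum_sum_type, Fintype.sum_sigma, sum_add_distrib]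

section MinimalBarrier

variable [Fintype ι] [DecidableEq ι] [DecidableEq V] {C : Type*} [DecidableEq C]
  {U : Finset (GadgetNode F)} {f : GadgetNode F → C}

/-- The edges with a flag in `U`. -/
def flagCut (U : Finset (GadgetNode F)) : Finset ι := {e | ∃ v, flag e v ∈ U}

/-- The edges with a dummy in `U`. -/
def dummyCut (U : Finset (GadgetNode F)) : Finset ι := {e | ∃ i, dummy e i ∈ U}

/-- The number of flags and dummies of `e` outside `U` that have colour `x`. -/
def edgeColorCount (U : Finset (GadgetNode F)) (f : GadgetNode F → C) (x : C) (e : ι) : ℕ :=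
  #{v : F e | flag e v ∉ U ∧ f (flag e v) = x} + #{i | dummy e i ∉ U ∧ f (dummy e i) = x}

theorem sum_edgeColorCount (U : Finset (GadgetNode F)) (f : GadgetNode F → C) (x : C) :
    ∑ e, edgeColorCount U f x e = #{y ∈ Uᶜ | f y = x} := by
  simp only [edgeColorCount]
  rw [← card_filter_gadgetNode fun y => y ∉ U ∧ f y = x]
  congr 1
  ext y
  simp

variable [Fintype C]

theorem exists_forall_flag_eq (h : IsBarrier (pairingGadget F) U f) :
    ∃ c : V → C, ∀ (e : ι) (v : F e), flag e v ∉ U → f (flag e v) = c v := by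
  obtain ⟨x, -⟩ := card_pos.mp (h.card_lt.pos)
  have : Nonempty C := ⟨x⟩
  have hfactors : Function.FactorsThrough
      (fun p : {p : Σ e, F e // .inl p ∉ U} => f (.inl p.1)) (fun p => p.1.2.1) := by
    intro p q hpq
    by_cases he : p.1.1 = q.1.1
    · obtain ⟨⟨e, v⟩, hp⟩ := p
      obtain ⟨⟨e', v'⟩, hq⟩ := q
      obtain rfl : e = e' := he
      obtain rfl : v = v' := Subtype.ext hpq
      rfl
    · exact h.eq_of_adj p.2 q.2 ⟨he, hpq⟩
  obtain ⟨c, hc⟩ := (Function.factorsThrough_iff _).mp hfactors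
  exact ⟨c, fun e v hv => congrFun hc ⟨⟨e, v⟩, hv⟩⟩

theorem flag_mem_of_flag_mem (h : IsMinimalBarrier (pairingGadget F) U f)
    (hF : ∀ e, 2 ≤ #(F e)) {e : ι} {u v : F e} (hv : flag e v ∈ U) : flag e u ∈ U := by
  by_contra hu
  obtain ⟨c, hc⟩ := exists_forall_flag_eq h.toIsBarrier
  obtain ⟨y, hyU, hy, hyu, hyc⟩ :=
    h.exists_adj_ne_ne (even_card_gadgetNode hF) hv (f (flag e u)) (c v)
  obtain ⟨i, rfl⟩ | ⟨e', hv', -, rfl⟩ := eq_dummy_or_eq_flag_of_flag_adj hy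
  · exact hyu (h.eq_of_adj hu hyU (flag_adj_dummy u i)).symm
  · exact hyc (hc e' _ hyU)

theorem dummy_mem_of_dummy_mem (h : IsMinimalBarrier (pairingGadget F) U f)
    (hF : ∀ e, 2 ≤ #(F e)) {e : ι} {i j : Fin (#(F e) - 2)} (hi : dummy e i ∈ U) :
    dummy e j ∈ U := by
  by_contra hj
  obtain ⟨y, hyU, hy, hne, -⟩ :=
    h.exists_adj_ne_ne (even_card_gadgetNode hF) hi (f (dummy e j)) (f (dummy e j))
  obtain ⟨v, rfl⟩ := exists_eq_flag_of_dummy_adj hy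
  exact hne (h.eq_of_adj hyU hj (flag_adj_dummy v j))

theorem mem_flagCut (h : IsMinimalBarrier (pairingGadget F) U f) (hF : ∀ e, 2 ≤ #(F e)) {e : ι}
    (v : F e) : e ∈ flagCut U ↔ flag e v ∈ U := by
  simp only [flagCut, mem_filter, mem_univ, true_and]
  exact ⟨fun ⟨u, hu⟩ => flag_mem_of_flag_mem h hF hu, fun hv => ⟨v, hv⟩⟩

theorem mem_dummyCut (h : IsMinimalBarrier (pairingGadget F) U f) (hF : ∀ e, 2 ≤ #(F e)) {e : ι}
    (i : Fin (#(F e) - 2)) : e ∈ dummyCut U ↔ dummy e i ∈ U := by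
  simp only [dummyCut, mem_filter, mem_univ, true_and]
  exact ⟨fun ⟨j, hj⟩ => dummy_mem_of_dummy_mem h hF hj, fun hi => ⟨i, hi⟩⟩

theorem disjoint_flagCut_dummyCut (h : IsMinimalBarrier (pairingGadget F) U f)
    (hF : ∀ e, 2 ≤ #(F e)) : Disjoint (flagCut U) (dummyCut U) := by
  refine disjoint_left.mpr fun e hflag hdummy => ?_
  obtain ⟨i, hi⟩ := (mem_filter.mp hdummy).2
  obtain ⟨y, hyU, hy, -⟩ := h.exists_adj_ne_ne (even_card_gadgetNode hF) hi (f (dummy e i))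
    (f (dummy e i))
  obtain ⟨v, rfl⟩ := exists_eq_flag_of_dummy_adj hy
  exact hyU ((mem_flagCut h hF v).mp hflag)

theorem sum_flagCut_add_sum_dummyCut (h : IsMinimalBarrier (pairingGadget F) U f)
    (hF : ∀ e, 2 ≤ #(F e)) :
    ∑ e ∈ flagCut U, #(F e) + ∑ e ∈ dummyCut U, (#(F e) - 2) = #U := by
  calc ∑ e ∈ flagCut U, #(F e) + ∑ e ∈ dummyCut U, (#(F e) - 2)
      = ∑ e, ((if e ∈ flagCut U then #(F e) else 0) +
          if e ∈ dummyCut U then #(F e) - 2 else 0) := by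
        simp only [sum_add_distrib, sum_ite_mem, univ_inter]
    _ = ∑ e, (#{v : F e | flag e v ∈ U} + #{i | dummy e i ∈ U}) := by
        refine sum_congr rfl fun e _ => ?_
        simp only [← mem_flagCut h hF, ← mem_dummyCut h hF]
        split_ifs with hflag hdummy hdummy <;> simp [hflag, hdummy]
    _ = #U := by rw [← card_filter_gadgetNode (· ∈ U), filter_univ_mem]

/-- The odd colours of a barrier not occurring on the dummies of an edge whose flags are cut. -/
def freeOddColors (U : Finset (GadgetNode F)) (f : GadgetNode F → C) : Finset C :=
  oddColors U f \ (flagCut U).biUnion fun e => univ.image fun i => f (dummy e i)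

theorem card_freeOddColors_ge (h : IsMinimalBarrier (pairingGadget F) U f)
    (hF : ∀ e, 2 ≤ #(F e)) :
    2 * #(flagCut U) + ∑ e ∈ dummyCut U, (#(F e) - 2) + 2 ≤ #(freeOddColors U f) := by
  have hdummies : #((flagCut U).biUnion fun e => univ.image fun i => f (dummy e i)) ≤
      ∑ e ∈ flagCut U, (#(F e) - 2) :=
    card_biUnion_le.trans (sum_le_sum fun e _ => card_image_le.trans (by simp))
  have hflags : ∑ e ∈ flagCut U, #(F e) = ∑ e ∈ flagCut U, (#(F e) - 2) + 2 * #(flagCut U) := by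
    rw [mul_comm, ← smul_eq_mul, ← sum_const, ← sum_add_distrib]
    exact sum_congr rfl fun e _ => (Nat.sub_add_cancel (hF e)).symm
  have hsdiff := le_card_sdiff ((flagCut U).biUnion fun e => univ.image fun i => f (dummy e i))
    (oddColors U f)
  have hU := sum_flagCut_add_sum_dummyCut h hF
  have hodd := h.card_add_two_le (even_card_gadgetNode hF)
  rw [freeOddColors]
  lia

theorem edgeColorCount_eq_of_mem_dummyCut (h : IsMinimalBarrier (pairingGadget F) U f)
    (hF : ∀ e, 2 ≤ #(F e)) {c : V → C} (hc : ∀ e (v : F e), flag e v ∉ U → f (flag e v) = c v)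
    (x : C) {e : ι} (he : e ∈ dummyCut U) : edgeColorCount U f x e = #{v ∈ F e | c v = x} := by
  have hflag (v : F e) : flag e v ∉ U :=
    (mem_flagCut h hF v).not.mp (disjoint_right.mp (disjoint_flagCut_dummyCut h hF) he)
  have hdummy i : dummy e i ∈ U := (mem_dummyCut h hF i).mp he
  simp only [edgeColorCount, hflag, hdummy, hc, not_true_eq_false, not_false_eq_true, true_and,
    false_and, filter_false, card_empty, add_zero]
  rw [card_filter, card_filter, sum_coe_sort (F e) fun v => if c v = x then 1 else 0]

theorem dummy_eq_of_notMem_union (h : IsMinimalBarrier (pairingGadget F) U f)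
    (hF : ∀ e, 2 ≤ #(F e)) {c : V → C} (hc : ∀ e (v : F e), flag e v ∉ U → f (flag e v) = c v)
    {e : ι} (he : e ∉ flagCut U ∪ dummyCut U) (v : F e) (i : Fin (#(F e) - 2)) :
    f (dummy e i) = c v := by
  rw [notMem_union, mem_flagCut h hF v, mem_dummyCut h hF i] at he
  rw [← hc e v he.1, h.eq_of_adj he.1 he.2 (flag_adj_dummy v i)]

theorem vertexColor_eq_of_notMem_union (h : IsMinimalBarrier (pairingGadget F) U f)
    (hF : ∀ e, 3 ≤ #(F e)) {c : V → C} (hc : ∀ e (v : F e), flag e v ∉ U → f (flag e v) = c v)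
    {e : ι} (he : e ∉ flagCut U ∪ dummyCut U) {u v : V} (hu : u ∈ F e) (hv : v ∈ F e) :
    c u = c v := by
  have hdummy := dummy_eq_of_notMem_union h (fun e => Nat.le_of_succ_le (hF e)) hc he
  let i : Fin (#(F e) - 2) := ⟨0, by have := hF e; lia⟩
  rw [← hdummy ⟨u, hu⟩ i, ← hdummy ⟨v, hv⟩ i]

-- For an edge avoiding `U`, all of its `2 * #(F e) - 2` flags and dummies have the same colour.
theorem even_edgeColorCount_of_notMem_dummyCut (h : IsMinimalBarrier (pairingGadget F) U f)
    (hF : ∀ e, 3 ≤ #(F e)) {x : C} (hx : x ∈ freeOddColors U f) {e : ι} (he : e ∉ dummyCut U) :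
    Even (edgeColorCount U f x e) := by
  have hF₂ e : 2 ≤ #(F e) := Nat.le_of_succ_le (hF e)
  by_cases heA : e ∈ flagCut U
  · have hflag (v : F e) : flag e v ∈ U := (mem_flagCut h hF₂ v).mp heA
    have hdummy i : f (dummy e i) ≠ x := fun hi => (mem_sdiff.mp hx).2
      (mem_biUnion.mpr ⟨e, heA, mem_image.mpr ⟨i, mem_univ _, hi⟩⟩)
    simp [edgeColorCount, hflag, hdummy]
  · obtain ⟨c, hc⟩ := exists_forall_flag_eq h.toIsBarrier
    have hunion : e ∉ flagCut U ∪ dummyCut U := notMem_union.mpr ⟨heA, he⟩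
    have hflag (v : F e) : flag e v ∉ U := (mem_flagCut h hF₂ v).not.mp heA
    have hdummy i : dummy e i ∉ U := (mem_dummyCut h hF₂ i).not.mp he
    obtain ⟨w, hw⟩ : (F e).Nonempty := card_pos.mp (by have := hF e; lia)
    have hcw (v : F e) : c v = c w := vertexColor_eq_of_notMem_union h hF hc hunion v.2 hw
    simp only [edgeColorCount, hflag, hdummy, hc, hcw, not_false_eq_true, true_and,
      dummy_eq_of_notMem_union h hF₂ hc hunion ⟨w, hw⟩]
    by_cases hx : c w = x
    · simp only [hx, filter_true, card_univ, Fintype.card_coe, Fintype.card_fin]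
      exact ⟨#(F e) - 1, by have := hF e; lia⟩
    · simp [hx]

theorem odd_sum_dummyCut (h : IsMinimalBarrier (pairingGadget F) U f)
    (hF : ∀ e, 3 ≤ #(F e)) {c : V → C} (hc : ∀ e (v : F e), flag e v ∉ U → f (flag e v) = c v)
    {x : C} (hx : x ∈ freeOddColors U f) :
    Odd (∑ e ∈ dummyCut U, #{v ∈ F e | c v = x}) := by
  have hodd := mem_oddColors.mp (mem_sdiff.mp hx).1
  rw [← sum_edgeColorCount, ← sum_add_sum_compl (dummyCut U), Nat.odd_add] at hodd
  have heven : Even (∑ e ∈ (dummyCut U)ᶜ, edgeColorCount U f x e) := even_sum _ fun e he =>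
    even_edgeColorCount_of_notMem_dummyCut h hF hx (mem_compl.mp he)
  rw [← sum_congr rfl fun e he => edgeColorCount_eq_of_mem_dummyCut h
    (fun e => Nat.le_of_succ_le (hF e)) hc x he]
  exact hodd.mpr heven

theorem exists_isPairingObstruction_of_isMinimalBarrier
    (h : IsMinimalBarrier (pairingGadget F) U f) (hF : ∀ e, 3 ≤ #(F e)) :
    ∃ (c : V → C) (R : Finset V), IsPairingObstruction F (flagCut U) (dummyCut U) c R := by
  obtain ⟨c, hc⟩ := exists_forall_flag_eq h.toIsBarrier
  have hsurj : Set.SurjOn c Set.univ (freeOddColors U f) := fun x hx => by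
    obtain ⟨e, -, he⟩ := exists_ne_zero_of_sum_ne_zero (odd_sum_dummyCut h hF hc hx).pos.ne'
    obtain ⟨v, hv⟩ := card_ne_zero.mp he
    exact ⟨v, Set.mem_univ v, (mem_filter.mp hv).2⟩
  obtain ⟨R, -, hinj, hR⟩ := exists_subset_injOn_image_eq_of_surjOn _ _ hsurj
  refine ⟨c, R, fun he u hu v hv => vertexColor_eq_of_notMem_union h hF hc he hu hv, hinj, ?_,
    fun v hv => odd_sum_dummyCut h hF hc (hR ▸ mem_image_of_mem c hv)⟩
  rw [← card_image_of_injOn hinj, hR]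
  exact card_freeOddColors_ge h fun e => Nat.le_of_succ_le (hF e)

end MinimalBarrier

theorem exists_isPairingObstruction [Finite ι] [DecidableEq ι] [DecidableEq V]
    (hF : ∀ e, 3 ≤ #(F e)) (h : ∀ M : (pairingGadget F).Subgraph, ¬ M.IsPerfectMatching) :
    ∃ (A B : Finset ι) (c : V → GadgetNode F) (R : Finset V), IsPairingObstruction F A B c R := by
  have := Fintype.ofFinite ι
  obtain ⟨U, f, hbarrier⟩ := exists_isBarrier_of_forall_not_isPerfectMatching h
  obtain ⟨U', f', hminimal⟩ := hbarrier.exists_isMinimalBarrier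
  exact ⟨_, _, exists_isPairingObstruction_of_isMinimalBarrier hminimal hF⟩

end pairingGadget

end Gadget

-- The linear bounds imply `k * (a + 1) ≤ s` and `k * a + (k - 2) * (b - a - 1) ≤ r - k`; their
-- product exceeds the quadratic bound `k * (k - 1) * a` on `s * (r - k)` unless `a = b - 1 = 0`.
theorem eq_zero_and_eq_one_of_obstruction_bounds {a b k r s : ℕ} (hk : 3 ≤ k) (hsr : s ≤ r)
    (hquad : s * r ≤ s * k + (k - 1) * (a * k)) (hupper : 3 * r ≤ k * b + 2 * s)
    (hlower : 2 * a + b * (k - 2) + 2 ≤ r) : a = 0 ∧ b = 1 := by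
  obtain ⟨t, rfl⟩ := Nat.exists_eq_add_of_le hk
  simp only [show 3 + t - 2 = t + 1 by lia, show 3 + t - 1 = t + 2 by lia] at hlower hquad
  have hab : a + 1 ≤ b := by nlinarith
  obtain ⟨j, rfl⟩ := Nat.exists_eq_add_of_le hab
  have hs : (3 + t) * (a + 1) ≤ s := by nlinarith
  obtain ⟨d, rfl⟩ : ∃ d, r = 3 + t + d := Nat.exists_eq_add_of_le (by nlinarith)
  have hd : (3 + t) * a + (t + 1) * j ≤ d := by nlinarith
  have hcancel : (3 + t) * ((a + 1) * ((3 + t) * a + (t + 1) * j)) ≤ (3 + t) * ((t + 2) * a) := by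
    calc _ = (3 + t) * (a + 1) * ((3 + t) * a + (t + 1) * j) := by ring
      _ ≤ s * d := Nat.mul_le_mul hs hd
      _ ≤ (t + 2) * (a * (3 + t)) := by linarith
      _ = _ := by ring
  have hzero : a + (t + 1) * j ≤ 0 := by
    have hle := Nat.le_of_mul_le_mul_left hcancel (by lia)
    nlinarith [Nat.zero_le (a * ((3 + t) * a + (t + 1) * j))]
  grind

namespace IsPairingObstruction

variable {ι V C : Type*} [DecidableEq ι] [DecidableEq C] {F : ι → Finset V}
  {A B : Finset ι} {c : V → C} {R : Finset V} {k : ℕ}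

theorem card_le_of_mem [DecidableEq V] (h : IsPairingObstruction F A B c R) (hF : ∀ e, #(F e) = k)
    (hcov : Pairwise fun u v => ∃ e, u ∈ F e ∧ v ∈ F e) {v : V} (hv : v ∈ R) :
    #R ≤ 1 + (k - 1) * #{e ∈ A ∪ B | v ∈ F e} := by
  have hsub : R.erase v ⊆ {e ∈ A ∪ B | v ∈ F e}.biUnion fun e => (F e).erase v := by
    intro u hu
    obtain ⟨hne, huR⟩ := mem_erase.mp hu
    obtain ⟨e, hue, hve⟩ := hcov hne
    have he : e ∈ A ∪ B := by
      by_contra he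
      exact hne (h.injOn huR hv (h.eq_of_notMem_union he u hue v hve))
    exact mem_biUnion.mpr ⟨e, mem_filter.mpr ⟨he, hve⟩, mem_erase.mpr ⟨hne, hue⟩⟩
  have hcard : #(R.erase v) ≤ #{e ∈ A ∪ B | v ∈ F e} * (k - 1) :=
    (card_le_card hsub).trans <| card_biUnion_le_card_mul _ _ _ fun e he => by
      rw [card_erase_of_mem (mem_filter.mp he).2, hF]
  rw [← card_erase_add_one hv, add_comm, mul_comm (k - 1)]
  exact Nat.add_le_add_left hcard 1

/-- The vertices of `R` whose colour occurs only once among the incidences of edges in `B`. -/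
def singletons (F : ι → Finset V) (B : Finset ι) (c : V → C) (R : Finset V) : Finset V :=
  {v ∈ R | ∑ e ∈ B, #{u ∈ F e | c u = c v} = 1}

theorem three_mul_card_le (h : IsPairingObstruction F A B c R) (hF : ∀ e, #(F e) = k) :
    3 * #R ≤ k * #B + 2 * #(singletons F B c R) := by
  have hedge e : ∑ v ∈ R, #{u ∈ F e | c u = c v} ≤ k := by
    rw [← sum_image (f := fun x => #{u ∈ F e | c u = x}) h.injOn, ← hF e]
    exact (sum_card_fiberwise_eq_card_filter _ _ _).trans_le (card_filter_le _ _)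
  calc 3 * #R = ∑ _v ∈ R, 3 := by rw [sum_const, smul_eq_mul, mul_comm]
    _ ≤ ∑ v ∈ R, (∑ e ∈ B, #{u ∈ F e | c u = c v} +
          2 * if ∑ e ∈ B, #{u ∈ F e | c u = c v} = 1 then 1 else 0) := by
        refine sum_le_sum fun v hv => ?_
        obtain ⟨r, hr⟩ := h.odd_sum v hv
        split_ifs <;> lia
    _ = ∑ e ∈ B, ∑ v ∈ R, #{u ∈ F e | c u = c v} + 2 * #(singletons F B c R) := by
        rw [sum_add_distrib, ← mul_sum, ← card_filter, sum_comm, singletons]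
    _ ≤ k * #B + 2 * #(singletons F B c R) := by
        rw [mul_comm k, ← smul_eq_mul]
        exact Nat.add_le_add_right (sum_le_card_nsmul _ _ _ fun e _ => hedge e) _

theorem card_le_of_mem_singletons [DecidableEq V] (h : IsPairingObstruction F A B c R)
    (hF : ∀ e, #(F e) = k) (hk : 1 ≤ k) (hcov : Pairwise fun u v => ∃ e, u ∈ F e ∧ v ∈ F e) {v : V}
    (hv : v ∈ singletons F B c R) : #R ≤ k + (k - 1) * #{e ∈ A | v ∈ F e} := by
  obtain ⟨hvR, hone⟩ := mem_filter.mp hv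
  have hB : #{e ∈ B | v ∈ F e} ≤ 1 := by
    rw [← hone, card_filter]
    refine sum_le_sum fun e _ => ?_
    split_ifs with hve
    · exact card_pos.mpr ⟨v, mem_filter.mpr ⟨hve, rfl⟩⟩
    · exact Nat.zero_le _
  calc #R ≤ 1 + (k - 1) * #{e ∈ A ∪ B | v ∈ F e} := h.card_le_of_mem hF hcov hvR
    _ ≤ 1 + (k - 1) * (#{e ∈ A | v ∈ F e} + 1) := by
      rw [filter_union]
      gcongr
      exact (card_union_le _ _).trans (Nat.add_le_add_left hB _)
    _ = k + (k - 1) * #{e ∈ A | v ∈ F e} := by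
      rw [mul_add_one]
      lia

theorem card_singletons_mul_card_le (h : IsPairingObstruction F A B c R) (hF : ∀ e, #(F e) = k)
    (hk : 1 ≤ k) (hcov : Pairwise fun u v => ∃ e, u ∈ F e ∧ v ∈ F e) :
    #(singletons F B c R) * #R ≤ #(singletons F B c R) * k + (k - 1) * (#A * k) := by
  classical
  set S := singletons F B c R
  have hdegrees : ∑ v ∈ S, #{e ∈ A | v ∈ F e} ≤ #A * k := by
    refine (sum_card_bipartiteAbove_eq_sum_card_bipartiteBelow fun v e => v ∈ F e).trans_le ?_
    exact sum_le_card_nsmul _ _ _ fun e _ => hF e ▸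
      card_le_card fun v hv => (mem_filter.mp hv).2
  calc #S * #R = ∑ _v ∈ S, #R := by rw [sum_const, smul_eq_mul]
    _ ≤ ∑ v ∈ S, (k + (k - 1) * #{e ∈ A | v ∈ F e}) :=
      sum_le_sum fun v hv => h.card_le_of_mem_singletons hF hk hcov hv
    _ = #S * k + (k - 1) * ∑ v ∈ S, #{e ∈ A | v ∈ F e} := by
      rw [sum_add_distrib, sum_const, smul_eq_mul, mul_sum]
    _ ≤ #S * k + (k - 1) * (#A * k) := by gcongr

theorem card_eq_zero_and_card_eq_one (h : IsPairingObstruction F A B c R)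
    (hF : ∀ e, #(F e) = k) (hk : 3 ≤ k) (hcov : Pairwise fun u v => ∃ e, u ∈ F e ∧ v ∈ F e) :
    #A = 0 ∧ #B = 1 := by
  have hlower := h.card_ge
  simp only [hF, sum_const, smul_eq_mul] at hlower
  exact eq_zero_and_eq_one_of_obstruction_bounds hk (card_filter_le _ _)
    (h.card_singletons_mul_card_le hF (Nat.one_le_of_lt hk) hcov) (h.three_mul_card_le hF) hlower

end IsPairingObstruction

theorem not_isPairingObstruction {ι V C : Type*} [Nontrivial ι] [DecidableEq ι] [DecidableEq C]
    {F : ι → Finset V} {A B : Finset ι} {c : V → C} {R : Finset V} {k : ℕ}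
    (hF : ∀ e, #(F e) = k) (hk : 3 ≤ k) (hcov : Pairwise fun u v => ∃ e, u ∈ F e ∧ v ∈ F e) :
    ¬ IsPairingObstruction F A B c R := by
  intro h
  obtain ⟨hA, hB⟩ := h.card_eq_zero_and_card_eq_one hF hk hcov
  obtain rfl := card_eq_zero.mp hA
  obtain ⟨e₀, rfl⟩ := card_eq_one.mp hB
  have hmono {e} (he : e ≠ e₀) : ∀ u ∈ F e, ∀ v ∈ F e, c u = c v :=
    h.eq_of_notMem_union (by simpa using he)
  obtain ⟨e, he⟩ := exists_ne e₀
  obtain ⟨w, hw⟩ : (F e).Nonempty := card_pos.mp (by have := hF e; lia)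
  obtain ⟨v, hvw⟩ : ∃ v, c v ≠ c w := by
    obtain ⟨u, hu, v, hv, huv⟩ := one_lt_card.mp (Nat.lt_of_lt_of_le (by lia) h.card_ge)
    by_contra! hR
    exact huv (h.injOn hu hv ((hR u).trans (hR v).symm))
  have hcommon : ∀ u ∈ F e, u ∈ F e₀ ∧ v ∈ F e₀ := by
    intro u hu
    have hne : c u ≠ c v := fun huv => hvw (huv ▸ hmono he u hu w hw)
    obtain ⟨e', hue', hve'⟩ := hcov (ne_of_apply_ne c hne)
    obtain rfl : e' = e₀ := by
      by_contra he'
      exact hne (hmono he' u hue' v hve')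
    exact ⟨hue', hve'⟩
  have hedge : F e = F e₀ :=
    eq_of_subset_of_card_le (fun u hu => (hcommon u hu).1) (by rw [hF, hF])
  exact hvw (hmono he v (hedge ▸ (hcommon w hw).2) w hw)

theorem isQuasiEulerian_of_pairwise_exists_mem {ι : Type*} {V : Type} [Fintype ι] [Nontrivial ι]
    {F : ι → Finset V} {k : ℕ} (hF : ∀ e, #(F e) = k) (hk : 3 ≤ k)
    (hcov : Pairwise fun u v => ∃ e, u ∈ F e ∧ v ∈ F e) : IsQuasiEulerian (univ.val.map F) := by
  classical
  by_cases hmatching : ∃ M : (pairingGadget F).Subgraph, M.IsPerfectMatching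
  · obtain ⟨M, hM⟩ := hmatching
    exact (pairingGadget.isEvenPairing_unabsorbed hM fun e => by rw [hF]; lia).isQuasiEulerian
  · obtain ⟨A, B, c, R, h⟩ := pairingGadget.exists_isPairingObstruction
      (fun e => (hF e).symm ▸ hk) (not_exists.mp hmatching)
    exact (not_isPairingObstruction hF hk hcov h).elim

theorem IsCoveringHypergraph.pairwise_exists_mem {V : Type} [DecidableEq V]
    {E : Multiset (Finset V)} {l k : ℕ} (h : IsCoveringHypergraph E l k) (hl : 2 ≤ l)
    (hlk : l ≤ k) : Pairwise fun u v => ∃ f ∈ E, u ∈ f ∧ v ∈ f := by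
  obtain ⟨hE, hcard, hcov⟩ := h
  intro u v huv
  obtain ⟨f, hf⟩ := Multiset.exists_mem_of_ne_zero hE
  have hunion : l ≤ #({u, v} ∪ f) := hlk.trans (hcard f hf ▸ card_le_card subset_union_right)
  obtain ⟨s, huvs, -, hs⟩ :=
    exists_subsuperset_card_eq subset_union_left ((card_pair huv).trans_le hl) hunion
  obtain ⟨g, hg, hsg⟩ := hcov s hs
  exact ⟨g, hg, hsg (huvs (by simp)), hsg (huvs (by simp))⟩

/-- Let `2 ≤ ℓ < k` and let `H` be an `ℓ`-covering `k`-hypergraph.  Then `H` is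
quasi-eulerian if and only if `H` has at least two edges. -/
theorem lCoveringKHypergraph_quasiEulerian_iff {V : Type} [Fintype V] [DecidableEq V]
    (l k : ℕ) (hl : 2 ≤ l) (hlk : l < k) (E : Multiset (Finset V))
    (hH : IsCoveringHypergraph E l k) :
    IsQuasiEulerian E ↔ 2 ≤ Multiset.card E := by
  refine ⟨fun h => h.two_le_card hH.1, fun htwo => ?_⟩
  have : Nontrivial E.ToType := Fintype.one_lt_card_iff_nontrivial.mp
    (htwo.trans_eq (Multiset.card_coe E).symm)
  have hcov : Pairwise fun u v => ∃ e : E.ToType, u ∈ e.1 ∧ v ∈ e.1 := fun u v huv => by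
    obtain ⟨f, hf, huvf⟩ := hH.pairwise_exists_mem hl hlk.le huv
    exact ⟨⟨f, 0, Multiset.count_pos.mpr hf⟩, huvf⟩
  rw [← Multiset.map_univ_coe E]
  exact isQuasiEulerian_of_pairwise_exists_mem
    (fun e : E.ToType => hH.2.1 e.1 Multiset.coe_mem) (by lia) hcov
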